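/- If R is a Prüfer v-multiplication domain (PvMD), then every w-FP-projective R-module has projective dimension at most 1. -/

import Mathlib

open CategoryTheory

universe u

noncomputable section

variable (R : Type u) [CommRing R]

/-- The Ext group `Ext^n_R(M, N)` as an `R`-module (via `ModuleCat`). -/
def extMod (M N : Type u) [AddCommGroup M] [Module R M]
    [AddCommGroup N] [Module R N] (n : ℕ) : ModuleCat R :=
  ((Ext R (ModuleCat R) n).obj (Opposite.op (ModuleCat.of R M))).obj (ModuleCat.of R N)

/-- `J` is a Glaz–Vasconcelos ideal: finitely generated and the natural map
`R → Hom_R(J, R)` is bijective. -/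
def IsGVIdeal (J : Ideal R) : Prop :=
  J.FG ∧ Function.Bijective (fun r : R => (r • J.subtype : J →ₗ[R] R))

/-- A module is GV-torsion if every element is annihilated by some GV-ideal. -/
def IsGVTorsion (M : Type u) [AddCommGroup M] [Module R M] : Prop :=
  ∀ x : M, ∃ J : Ideal R, IsGVIdeal R J ∧ ∀ j ∈ J, j • x = 0

/-- An ideal `I` is a `w`-ideal if it is `w`-closed: whenever `J x ⊆ I` for some
GV-ideal `J`, one has `x ∈ I`. -/
def IsWIdeal (I : Ideal R) : Prop :=
  ∀ (x : R) (J : Ideal R), IsGVIdeal R J → (∀ j ∈ J, j * x ∈ I) → x ∈ I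

/-- `R` is a DW-ring if every maximal ideal is a `w`-ideal. -/
def IsDWRing : Prop :=
  ∀ m : Ideal R, m.IsMaximal → IsWIdeal R m

/-- `A` is absolutely `w`-pure if `Ext^1_R(N, A)` is GV-torsion for every
finitely presented module `N`. -/
def IsAbsolutelyWPure (A : Type u) [AddCommGroup A] [Module R A] : Prop :=
  ∀ (N : Type u) [AddCommGroup N] [Module R N], Module.FinitePresentation R N →
    IsGVTorsion R (extMod R N A 1)

/-- `M` is `w`-FP-projective if `Ext^1_R(M, A) = 0` for every absolutely
`w`-pure module `A`. -/
def IsWFPProjective (M : Type u) [AddCommGroup M] [Module R M] : Prop :=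
  ∀ (A : Type u) [AddCommGroup A] [Module R A], IsAbsolutelyWPure R A →
    Subsingleton (extMod R M A 1)

end
/-- `p` is a maximal `w`-ideal: a proper `w`-ideal maximal among proper `w`-ideals. -/
def IsMaximalWIdeal (R : Type u) [CommRing R] (p : Ideal R) : Prop :=
  IsWIdeal R p ∧ p ≠ ⊤ ∧ ∀ q : Ideal R, IsWIdeal R q → q ≠ ⊤ → p ≤ q → p = q

/-!
An h-divisible module is a quotient `A = E / B` of an injective module `E`. Let `N` be finitely
presented, `0 → K → F → N → 0` with `F` finitely generated free. Shifting dimensions along `E` and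
`F` embeds `Ext¹(N, A)` into `Ext²(N, B) ≅ Ext¹(K, B)`, so any `r : R` for which `r • id` factors
through a free module on `K` annihilates `Ext¹(N, A)`. If `R_p` is a valuation domain, the finitely
generated torsion-free module `K_p` is free, and clearing denominators in a splitting of a free
cover of `K_p` gives such an `r` outside `p`. Hence over a PvMD the annihilator of `Ext¹(N, A)`
lies in no prime maximal `w`-ideal. An ideal maximal among those containing no GV-ideal is both
prime and a maximal `w`-ideal, so that annihilator contains a GV-ideal: h-divisible modules are
absolutely `w`-pure. Finally `Ext²(M, N)` is a quotient of `Ext¹(M, E / N)` for `N` embedded in an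
injective module `E`, and `E / N` is h-divisible.
-/

section

universe w v u'

variable {R : Type*} [CommRing R] {C : Type u'} [Category.{v} C] [Abelian C] [Linear R C]
  [HasExt.{w} C]

lemma smul_extMk {X Y : C} (P : ProjectiveResolution X) {n m : ℕ} (f : P.complex.X n ⟶ Y)
    (hm : n + 1 = m) (hf : P.complex.d m n ≫ f = 0) (r : R) :
    r • P.extMk f m hm hf = P.extMk (r • f) m hm (by rw [Linear.comp_smul, hf, smul_zero]) := by
  rw [Abelian.Ext.smul_eq_comp_mk₀, P.extMk_comp_mk₀]
  congr 1
  rw [Linear.comp_smul, Category.comp_id]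

variable (R) in
/-- The class in `Ext^(n+1)(X, Y)` of an `(n+1)`-cocycle of the complex `Hom(P, Y)`, for a
projective resolution `P` of `X`. -/
noncomputable def cocyclesToExt {X : C} (P : ProjectiveResolution X) (Y : C) (n : ℕ) :
    LinearMap.ker ((P.complex.linearYonedaObj R Y).sc' n (n + 1) (n + 2)).g.hom →ₗ[R]
      Abelian.Ext X Y (n + 1) where
  toFun f := P.extMk f.1 (n + 2) rfl f.2
  map_add' f g := (P.add_extMk f.1 g.1 (n + 2) rfl f.2 g.2).symm
  map_smul' r f := (smul_extMk P f.1 rfl f.2 r).symm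

lemma range_moduleCatToCycles_eq_ker_cocyclesToExt {X : C} (P : ProjectiveResolution X) (Y : C)
    (n : ℕ) :
    LinearMap.range ((P.complex.linearYonedaObj R Y).sc' n (n + 1) (n + 2)).moduleCatToCycles =
      LinearMap.ker (cocyclesToExt R P Y n) := by
  ext f
  refine Iff.trans ?_ (P.extMk_eq_zero_iff f.1 (n + 2) rfl f.2 n rfl).symm
  exact exists_congr fun g => Subtype.ext_iff

lemma cocyclesToExt_surjective {X : C} (P : ProjectiveResolution X) (Y : C) (n : ℕ) :
    Function.Surjective (cocyclesToExt R P Y n) := fun x =>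
  let ⟨f, hf, h⟩ := P.extMk_surjective x (n + 2) rfl
  ⟨⟨f, hf⟩, h⟩

variable (R) in
/-- In positive degrees the derived functor `Ext` agrees with `Abelian.Ext`, whose elements are
morphisms in the derived category and which carries the long exact sequences. -/
noncomputable def extSuccLinearEquiv [EnoughProjectives C] (X Y : C) (n : ℕ) :
    ((Ext R C (n + 1)).obj (Opposite.op X)).obj Y ≃ₗ[R] Abelian.Ext X Y (n + 1) :=
  let P := ProjectiveResolution.of X
  let K := P.complex.linearYonedaObj R Y
  let S := K.sc' n (n + 1) (n + 2)
  (P.isoExt (n + 1) Y ≪≫ K.homologyIsoSc' n (n + 1) (n + 2) (by simp) (by simp) ≪≫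
      S.moduleCatHomologyIso).toLinearEquiv ≪≫ₗ
    Submodule.quotEquivOfEq _ _ (range_moduleCatToCycles_eq_ker_cocyclesToExt P Y n) ≪≫ₗ
    (cocyclesToExt R P Y n).quotKerEquivOfSurjective (cocyclesToExt_surjective P Y n)

lemma mem_annihilator_ext_succ_of_comp_eq_smul_id {X P : C} [Projective P] {r : R}
    {s : X ⟶ P} {p : P ⟶ X} (h : s ≫ p = r • 𝟙 X) (Y : C) (n : ℕ) :
    r ∈ Module.annihilator R (Abelian.Ext X Y (n + 1)) := by
  refine Module.mem_annihilator.2 fun x => ?_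
  calc r • x = (Abelian.Ext.mk₀ (r • 𝟙 X)).comp x (zero_add _) := by
        rw [Abelian.Ext.mk₀_smul, Abelian.Ext.smul_comp, Abelian.Ext.mk₀_id_comp]
    _ = (Abelian.Ext.mk₀ s).comp ((Abelian.Ext.mk₀ p).comp x (zero_add _)) (zero_add _) := by
        rw [← h, Abelian.Ext.mk₀_comp_mk₀_assoc]
    _ = 0 := by
        rw [Abelian.Ext.eq_zero_of_projective ((Abelian.Ext.mk₀ p).comp x (zero_add _)),
          Abelian.Ext.comp_zero]

lemma annihilator_ext_X₁_le_annihilator_ext_succ_X₃ {S : ShortComplex C} (hS : S.ShortExact)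
    [Projective S.X₂] (Y : C) (n : ℕ) :
    Module.annihilator R (Abelian.Ext S.X₁ Y n) ≤
      Module.annihilator R (Abelian.Ext S.X₃ Y (n + 1)) := by
  refine LinearMap.annihilator_le_of_surjective
    (Abelian.Ext.bilinearCompOfLinear R S.X₃ S.X₁ Y 1 n (n + 1) (add_comm 1 n) hS.extClass)
    fun x => ?_
  exact Abelian.Ext.contravariant_sequence_exact₃ hS Y x (Abelian.Ext.eq_zero_of_projective _)
    (add_comm 1 n)

lemma annihilator_ext_add_two_X₁_le_annihilator_ext_succ_X₃ {S : ShortComplex C}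
    (hS : S.ShortExact) [Injective S.X₂] (X : C) (n : ℕ) :
    Module.annihilator R (Abelian.Ext X S.X₁ (n + 2)) ≤
      Module.annihilator R (Abelian.Ext X S.X₃ (n + 1)) := by
  refine LinearMap.annihilator_le_of_injective
    ((Abelian.Ext.bilinearCompOfLinear R X S.X₃ S.X₁ (n + 1) 1 (n + 2) rfl).flip hS.extClass)
    ((injective_iff_map_eq_zero _).2 fun x hx => ?_)
  obtain ⟨y, rfl⟩ := Abelian.Ext.covariant_sequence_exact₃ X hS x rfl hx
  rw [Abelian.Ext.eq_zero_of_injective y, Abelian.Ext.zero_comp]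

lemma subsingleton_ext_succ_X₁ {S : ShortComplex C} (hS : S.ShortExact) [Injective S.X₂]
    (X : C) (n : ℕ) [Subsingleton (Abelian.Ext X S.X₃ n)] :
    Subsingleton (Abelian.Ext X S.X₁ (n + 1)) := by
  refine subsingleton_of_forall_eq 0 fun x => ?_
  obtain ⟨y, rfl⟩ :=
    Abelian.Ext.covariant_sequence_exact₁ X hS x (Abelian.Ext.eq_zero_of_injective _) rfl
  rw [Subsingleton.elim y 0, Abelian.Ext.zero_comp]

end

section

variable {R : Type*} [CommRing R] (S : Submonoid R) {K P P' : Type*} [AddCommGroup K] [Module R K]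
  [AddCommGroup P] [Module R P] [AddCommGroup P'] [Module R P']

lemma exists_comp_eq_smul_of_isLocalizedModule [Module.Finite R K] (f : P →ₗ[R] P')
    [IsLocalizedModule S f] (hf : Function.Injective f) (g : K →ₗ[R] P') :
    ∃ t ∈ S, ∃ σ : K →ₗ[R] P, f ∘ₗ σ = t • g := by
  obtain ⟨s, hs⟩ := Module.Finite.fg_top (R := R) (M := K)
  obtain ⟨⟨t, ht⟩, hts⟩ := IsLocalizedModule.exist_integer_multiples S f s g
  have hrange : ∀ k, (t • g) k ∈ LinearMap.range f := by
    suffices ⊤ ≤ (LinearMap.range f).comap (t • g) from fun k => this Submodule.mem_top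
    exact hs ▸ Submodule.span_le.2 hts
  let e := LinearEquiv.ofInjective f hf
  refine ⟨t, ht, e.symm ∘ₗ (t • g).codRestrict _ hrange, LinearMap.ext fun k => ?_⟩
  exact congrArg Subtype.val (e.apply_symm_apply _)

lemma mkLinearMap_injective_of_isTorsionFree [Module.IsTorsionFree R K]
    (hS : S ≤ nonZeroDivisors R) : Function.Injective (LocalizedModule.mkLinearMap S K) :=
  (IsLocalizedModule.injective_iff_isRegular S _).2 fun c =>
    (isRegular_iff_mem_nonZeroDivisors.2 (hS c.2)).isSMulRegular

lemma exists_comp_eq_smul_id_of_projective_localizedModule [Module.Finite R K]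
    [Module.IsTorsionFree R K] [Module.IsTorsionFree R P] (hS : S ≤ nonZeroDivisors R)
    [Module.Projective (Localization S) (LocalizedModule S K)]
    {ρ : P →ₗ[R] K} (hρ : Function.Surjective ρ) :
    ∃ t ∈ S, ∃ σ : K →ₗ[R] P, ρ ∘ₗ σ = t • LinearMap.id := by
  let ιK := LocalizedModule.mkLinearMap S K
  let ιP := LocalizedModule.mkLinearMap S P
  let ρS := LocalizedModule.map S ρ
  obtain ⟨s, hs⟩ := Module.projective_lifting_property ρS LinearMap.id
    (LocalizedModule.map_surjective S ρ hρ)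
  obtain ⟨t, ht, σ, hσ⟩ := exists_comp_eq_smul_of_isLocalizedModule S ιP
    (mkLinearMap_injective_of_isTorsionFree S hS) (s.restrictScalars R ∘ₗ ιK)
  refine ⟨t, ht, σ, LinearMap.ext fun k => mkLinearMap_injective_of_isTorsionFree S hS ?_⟩
  calc ιK (ρ (σ k)) = ρS (ιP (σ k)) := (IsLocalizedModule.map_apply S ιP ιK ρ (σ k)).symm
    _ = ρS (t • s (ιK k)) := congrArg ρS (LinearMap.congr_fun hσ k)
    _ = t • ρS (s (ιK k)) := (ρS.restrictScalars R).map_smul t _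
    _ = t • ιK k := congrArg (t • ·) (LinearMap.congr_fun hs (ιK k))
    _ = ιK (t • k) := (map_smul ιK t k).symm

lemma projective_of_isTorsionFree_of_valuationRing [IsDomain R] [ValuationRing R]
    [Module.Finite R K] [Module.IsTorsionFree R K] : Module.Projective R K := by
  have : Module.Flat R K := Module.Flat.flat_iff_torsion_eq_bot_of_isBezout.2
    (Submodule.isTorsionFree_iff_torsion_eq_bot.1 inferInstance)
  have : Module.Free R K := Module.free_of_flat_of_isLocalRing
  infer_instance

end

section

variable {R : Type u} [CommRing R]

lemma isGVIdeal_top : IsGVIdeal R (⊤ : Ideal R) := by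
  refine ⟨Module.Finite.fg_top, fun a b hab => ?_,
    fun f => ⟨f ⟨1, trivial⟩, LinearMap.ext fun x => ?_⟩⟩
  · simpa using LinearMap.congr_fun hab ⟨1, trivial⟩
  · calc f ⟨1, trivial⟩ * x = x.1 • f ⟨1, trivial⟩ := mul_comm _ _
      _ = f (x.1 • ⟨1, trivial⟩) := (map_smul f _ _).symm
      _ = f x := congrArg f (Subtype.ext (mul_one x.1))

lemma IsGVIdeal.mul {J₁ J₂ : Ideal R} (h₁ : IsGVIdeal R J₁) (h₂ : IsGVIdeal R J₂) :
    IsGVIdeal R (J₁ * J₂) := by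
  let e₁ : R ≃ₗ[R] (J₁ →ₗ[R] R) :=
    LinearEquiv.ofBijective (LinearMap.toSpanSingleton R _ J₁.subtype) h₁.2
  let e₂ : R ≃ₗ[R] (J₂ →ₗ[R] R) :=
    LinearEquiv.ofBijective (LinearMap.toSpanSingleton R _ J₂.subtype) h₂.2
  let e : R ≃ₗ[R] (TensorProduct R J₁ J₂ →ₗ[R] R) :=
    e₁ ≪≫ₗ e₂.congrRight ≪≫ₗ TensorProduct.lift.equiv (.id R) J₁ J₂ R
  let μ : TensorProduct R J₁ J₂ →ₗ[R] ↥(J₁ * J₂) := Submodule.mulMap' J₁ J₂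
  let precomp : (↥(J₁ * J₂) →ₗ[R] R) → (TensorProduct R J₁ J₂ →ₗ[R] R) := (· ∘ₗ μ)
  have precomp_injective : Function.Injective precomp := fun f g h =>
    (LinearMap.cancel_right (Submodule.mulMap'_surjective J₁ J₂)).1 h
  have e_eq : precomp ∘ (fun r : R => r • (J₁ * J₂).subtype) = e := by
    refine funext fun r => TensorProduct.ext' fun x y => ?_
    change r * (x.1 * y.1) = r * x.1 * y.1
    exact (mul_assoc _ _ _).symm
  have bij : Function.Bijective (precomp ∘ fun r : R => r • (J₁ * J₂).subtype) :=
    e_eq ▸ e.bijective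
  exact ⟨h₁.1.mul h₂.1, bij.1.of_comp, bij.2.of_comp_left precomp_injective⟩

/-- The ideal `I` contains a GV-ideal, i.e. its `w`-closure `I_w` is the whole ring. -/
def ContainsGVIdeal (I : Ideal R) : Prop :=
  ∃ J, IsGVIdeal R J ∧ J ≤ I

lemma isOka_containsGVIdeal : Ideal.IsOka (ContainsGVIdeal (R := R)) where
  top := ⟨⊤, isGVIdeal_top, le_rfl⟩
  oka := by
    rintro I a ⟨J₁, h₁, hJ₁⟩ ⟨J₂, h₂, hJ₂⟩
    refine ⟨J₁ * J₂, h₁.mul h₂, (Ideal.mul_mono_left hJ₁).trans ?_⟩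
    rw [Ideal.sup_mul]
    refine sup_le Ideal.mul_le_left (Ideal.span_singleton_mul_le_iff.2 fun y hy => ?_)
    rw [mul_comm]
    exact Ideal.mem_colon_span_singleton.1 (hJ₂ hy)

lemma IsWIdeal.eq_top_of_containsGVIdeal {I : Ideal R} (hI : IsWIdeal R I)
    (h : ContainsGVIdeal I) : I = ⊤ :=
  let ⟨J, hJ, hJI⟩ := h
  (Ideal.eq_top_iff_one I).2 (hI 1 J hJ fun j hj => (mul_one j).symm ▸ hJI hj)

lemma isWIdeal_of_maximal_not_containsGVIdeal {p : Ideal R}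
    (hp : Maximal (¬ContainsGVIdeal ·) p) : IsWIdeal R p := by
  intro x J hJ hJx
  by_contra hx
  have hsup : ContainsGVIdeal (p ⊔ Ideal.span {x}) :=
    not_not.1 (hp.not_prop_of_gt (Submodule.lt_sup_iff_notMem.2 hx))
  have hcolon : ContainsGVIdeal (p.colon (Ideal.span {x})) :=
    ⟨J, hJ, fun j hj => Ideal.mem_colon_span_singleton.2 (hJx j hj)⟩
  exact hp.prop (isOka_containsGVIdeal.oka hsup hcolon)

lemma isMaximalWIdeal_of_maximal_not_containsGVIdeal {p : Ideal R}
    (hp : Maximal (¬ContainsGVIdeal ·) p) : IsMaximalWIdeal R p := by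
  refine ⟨isWIdeal_of_maximal_not_containsGVIdeal hp, ?_, fun q hq hq_top hpq => ?_⟩
  · rintro rfl
    exact hp.prop isOka_containsGVIdeal.top
  · exact hp.eq_of_le (fun h => hq_top (hq.eq_top_of_containsGVIdeal h)) hpq

lemma exists_le_maximal_not_containsGVIdeal {I : Ideal R} (hI : ¬ContainsGVIdeal I) :
    ∃ p, I ≤ p ∧ Maximal (¬ContainsGVIdeal ·) p := by
  refine zorn_le_nonempty₀ {I : Ideal R | ¬ContainsGVIdeal I} (fun c hc hchain K hK => ?_) I hI
  refine ⟨sSup c, ?_, fun _ => le_sSup⟩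
  rintro ⟨J, hJ, hJc⟩
  obtain ⟨L, hL, hJL⟩ := (CompleteLattice.isCompactElement_iff_le_of_directed_sSup_le _ J).1
    ((Submodule.fg_iff_compact J).1 hJ.1) c ⟨K, hK⟩ hchain.directedOn hJc
  exact hc hL ⟨J, hJ, hJL⟩

lemma containsGVIdeal_of_forall_isMaximalWIdeal {I : Ideal R}
    (hI : ∀ p : Ideal R, p.IsPrime → IsMaximalWIdeal R p → ¬I ≤ p) : ContainsGVIdeal I := by
  by_contra h
  obtain ⟨p, hIp, hp⟩ := exists_le_maximal_not_containsGVIdeal h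
  exact hI p (isOka_containsGVIdeal.isPrime_of_maximal_not hp)
    (isMaximalWIdeal_of_maximal_not_containsGVIdeal hp) hIp

end

section

variable {R : Type u} [CommRing R]

/-- The modules `extMod R M N (n + 1)` as modules of `Abelian.Ext`. -/
noncomputable def extModSuccLinearEquiv (M N : Type u) [AddCommGroup M] [Module R M]
    [AddCommGroup N] [Module R N] (n : ℕ) :
    extMod R M N (n + 1) ≃ₗ[R] Abelian.Ext (ModuleCat.of R M) (ModuleCat.of R N) (n + 1) :=
  extSuccLinearEquiv R (ModuleCat.of R M) (ModuleCat.of R N) n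

lemma exists_comp_eq_smul_id_of_valuationRing [IsDomain R] {p : Ideal R} [p.IsPrime]
    [ValuationRing (Localization.AtPrime p)] {K P : Type*} [AddCommGroup K] [Module R K]
    [Module.Finite R K] [Module.IsTorsionFree R K] [AddCommGroup P] [Module R P]
    [Module.IsTorsionFree R P] {ρ : P →ₗ[R] K} (hρ : Function.Surjective ρ) :
    ∃ t ∉ p, ∃ σ : K →ₗ[R] P, ρ ∘ₗ σ = t • LinearMap.id :=
  have : Module.Projective (Localization.AtPrime p) (LocalizedModule p.primeCompl K) :=
    projective_of_isTorsionFree_of_valuationRing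
  exists_comp_eq_smul_id_of_projective_localizedModule p.primeCompl
    p.primeCompl_le_nonZeroDivisors hρ

lemma not_annihilator_ext_succ_le_of_isTorsionFree [IsDomain R] {p : Ideal R} [p.IsPrime]
    [ValuationRing (Localization.AtPrime p)] (K : Type u) [AddCommGroup K] [Module R K]
    [Module.Finite R K] [Module.IsTorsionFree R K] (B : ModuleCat.{u} R) (n : ℕ) :
    ¬Module.annihilator R (Abelian.Ext (ModuleCat.of R K) B (n + 1)) ≤ p := by
  obtain ⟨m, ρ, hρ⟩ := Module.Finite.exists_fin' R K
  obtain ⟨t, ht, σ, hσ⟩ := exists_comp_eq_smul_id_of_valuationRing (p := p) hρ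
  have : Projective (ModuleCat.of R (Fin m → R)) :=
    (IsProjective.iff_projective _).1 inferInstance
  have hcomp : ModuleCat.ofHom σ ≫ ModuleCat.ofHom ρ = t • 𝟙 (ModuleCat.of R K) :=
    ModuleCat.hom_ext hσ
  exact fun hle => ht (hle (mem_annihilator_ext_succ_of_comp_eq_smul_id hcomp B n))

variable (R) in
/-- The module `A` is h-divisible, encoded as a homomorphic image of an injective module; over
a domain this agrees with being an image of a direct sum of copies of the field of fractions. -/
def IsHDivisible (A : Type u) [AddCommGroup A] [Module R A] : Prop :=
  ∃ (E : Type u) (_ : AddCommGroup E) (_ : Module R E) (q : E →ₗ[R] A),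
    Module.Injective R E ∧ Function.Surjective q

lemma IsHDivisible.not_annihilator_ext_one_le [IsDomain R] {p : Ideal R} [p.IsPrime]
    [ValuationRing (Localization.AtPrime p)] {A : Type u} [AddCommGroup A] [Module R A]
    (hA : IsHDivisible R A) (N : Type u) [AddCommGroup N] [Module R N]
    [Module.FinitePresentation R N] :
    ¬Module.annihilator R (Abelian.Ext (ModuleCat.of R N) (ModuleCat.of R A) 1) ≤ p := by
  obtain ⟨E, _, _, q, hE, hq⟩ := hA
  obtain ⟨m, π, hπ⟩ := Module.Finite.exists_fin' R N
  have hE' : Injective q.shortComplexKer.X₂ := (Module.injective_iff_injective_object R E).1 hE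
  have hπ' : Projective π.shortComplexKer.X₂ := (IsProjective.iff_projective _).1
    (inferInstanceAs (Module.Projective R (Fin m → R)))
  have : Module.Finite R (LinearMap.ker π) :=
    Module.Finite.iff_fg.2 (Module.FinitePresentation.fg_ker π hπ)
  let B := ModuleCat.of R (LinearMap.ker q)
  intro hle
  refine not_annihilator_ext_succ_le_of_isTorsionFree (p := p) (LinearMap.ker π) B 0 ?_
  calc Module.annihilator R (Abelian.Ext (ModuleCat.of R (LinearMap.ker π)) B 1)
      ≤ Module.annihilator R (Abelian.Ext (ModuleCat.of R N) B 2) :=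
        annihilator_ext_X₁_le_annihilator_ext_succ_X₃ (π.shortExact_shortComplexKer hπ) B 1
    _ ≤ Module.annihilator R (Abelian.Ext (ModuleCat.of R N) (ModuleCat.of R A) 1) :=
        annihilator_ext_add_two_X₁_le_annihilator_ext_succ_X₃
          (q.shortExact_shortComplexKer hq) (ModuleCat.of R N) 0
    _ ≤ p := hle

lemma IsHDivisible.isAbsolutelyWPure [IsDomain R]
    (hR : ∀ (p : Ideal R) [p.IsPrime], IsMaximalWIdeal R p →
      ValuationRing (Localization.AtPrime p))
    {A : Type u} [AddCommGroup A] [Module R A] (hA : IsHDivisible R A) :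
    IsAbsolutelyWPure R A := by
  intro N _ _ hN x
  obtain ⟨J, hJ, hJle⟩ : ContainsGVIdeal (Module.annihilator R (extMod R N A 1)) := by
    refine containsGVIdeal_of_forall_isMaximalWIdeal fun p _ hp => ?_
    have := hR p hp
    rw [(extModSuccLinearEquiv N A 0).annihilator_eq]
    exact hA.not_annihilator_ext_one_le N
  exact ⟨J, hJ, fun j hj => Module.mem_annihilator.1 (hJle hj) x⟩

lemma hasProjectiveDimensionLE_one_of_forall_isHDivisible {M : ModuleCat.{u} R}
    (hM : ∀ (A : Type u) [AddCommGroup A] [Module R A], IsHDivisible R A →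
      Subsingleton (Abelian.Ext M (ModuleCat.of R A) 1)) :
    HasProjectiveDimensionLE M 1 := by
  refine hasProjectiveDimensionLT_of_enoughInjectives M 2 fun N => ?_
  obtain ⟨I⟩ := EnoughInjectives.presentation N
  let S := ShortComplex.mk I.f (Limits.cokernel.π I.f) (Limits.cokernel.condition I.f)
  have hS : S.ShortExact := { exact := ShortComplex.exact_cokernel I.f }
  have hX₃ : IsHDivisible R S.X₃ :=
    ⟨I.J, _, _, S.g.hom, (Module.injective_iff_injective_object R I.J).2 I.injective,
      (ModuleCat.epi_iff_surjective S.g).1 hS.epi_g⟩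
  have := hM S.X₃ hX₃
  exact subsingleton_ext_succ_X₁ hS M 1

end

/-- If `R` is a PvMD (i.e. `R_p` is a valuation domain for every maximal `w`-ideal `p`),
then every `w`-FP-projective module has projective dimension at most `1`
(i.e. `Ext^2_R(M, -) = 0`). -/
theorem pd_le_one_of_wFPProjective_of_pvmd (R : Type u) [CommRing R] [IsDomain R]
    (hPvMD : ∀ (p : Ideal R) [p.IsPrime], IsMaximalWIdeal R p →
      ValuationRing (Localization.AtPrime p))
    (M : Type u) [AddCommGroup M] [Module R M] (hM : IsWFPProjective R M) :
    ∀ (N : Type u) [AddCommGroup N] [Module R N], Subsingleton (extMod R M N 2) := by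
  intro N _ _
  have hpd : HasProjectiveDimensionLE (ModuleCat.of R M) 1 := by
    refine hasProjectiveDimensionLE_one_of_forall_isHDivisible fun A _ _ hA => ?_
    have : Subsingleton (extMod R M A 1) := hM A (hA.isAbsolutelyWPure hPvMD)
    exact (extModSuccLinearEquiv M A 0).symm.subsingleton
  have : Subsingleton (Abelian.Ext (ModuleCat.of R M) (ModuleCat.of R N) 2) :=
    HasProjectiveDimensionLT.subsingleton (ModuleCat.of R M) 2 2 le_rfl (ModuleCat.of R N)
  exact (extModSuccLinearEquiv M N 1).subsingleton
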